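/- Let K be a number field with r₁ real places (r₁ > 0) and r₂ complex places, and let Z⁺ = Z ∩ Kˣ⁺ be the group of totally positive singular elements of K. Then dim_{F₂}(Z⁺/Kˣ²) = ρ⁺ + r₂, where ρ⁺ = rk₂(C_K⁺) is the 2-rank of the narrow class group of K. -/

import Mathlib

open NumberField FractionalIdeal
open scoped nonZeroDivisors

variable (K : Type*) [Field K] [NumberField K]

/-- The group of singular elements of `K`: those `z ∈ Kˣ` whose principal fractional ideal
is the square of a fractional ideal. -/
noncomputable def singularSubgroup : Subgroup Kˣ where
  carrier := {z : Kˣ | ∃ a : FractionalIdeal (𝓞 K)⁰ K,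
    spanSingleton (𝓞 K)⁰ (z : K) = a ^ 2}
  one_mem' := ⟨1, by simp⟩
  mul_mem' := by
    rintro x y ⟨a, ha⟩ ⟨b, hb⟩
    exact ⟨a * b, by rw [Units.val_mul, ← spanSingleton_mul_spanSingleton, ha, hb, mul_pow]⟩
  inv_mem' := by
    rintro x ⟨a, ha⟩
    refine ⟨a⁻¹, ?_⟩
    rw [Units.val_inv_eq_inv_val, ← spanSingleton_inv, ha, inv_pow]

/-- The subgroup `Kˣ²` of squares in `Kˣ`. -/
def squaresSubgroup : Subgroup Kˣ := (powMonoidHom 2 : Kˣ →* Kˣ).range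

/-- The subgroup `Kˣ⁺` of totally positive elements of `Kˣ`. -/
def totPosSubgroup : Subgroup Kˣ where
  carrier := {x : Kˣ | ∀ φ : K →+* ℝ, 0 < φ (x : K)}
  one_mem' := fun φ => by simp
  mul_mem' := by
    intro x y hx hy φ
    rw [Units.val_mul, _root_.map_mul]
    exact mul_pos (hx φ) (hy φ)
  inv_mem' := by
    intro x hx φ
    rw [Units.val_inv_eq_inv_val, map_inv₀]
    exact inv_pos.mpr (hx φ)

/-- The subgroup `P_K⁺` of the group of invertible fractional ideals consisting of principal
fractional ideals generated by a totally positive element. -/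
noncomputable def totPosPrincipalSubgroup : Subgroup (FractionalIdeal (𝓞 K)⁰ K)ˣ where
  carrier := {I | ∃ x : Kˣ, (∀ φ : K →+* ℝ, 0 < φ (x : K)) ∧
    (I : FractionalIdeal (𝓞 K)⁰ K) = spanSingleton (𝓞 K)⁰ (x : K)}
  one_mem' := ⟨1, fun φ => by simp, by simp⟩
  mul_mem' := by
    rintro I J ⟨x, hx, hI⟩ ⟨y, hy, hJ⟩
    refine ⟨x * y, fun φ => ?_, ?_⟩
    · rw [Units.val_mul, _root_.map_mul]; exact mul_pos (hx φ) (hy φ)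
    · rw [Units.val_mul, hI, hJ, spanSingleton_mul_spanSingleton, Units.val_mul]
  inv_mem' := by
    rintro I ⟨x, hx, hI⟩
    refine ⟨x⁻¹, fun φ => ?_, ?_⟩
    · rw [Units.val_inv_eq_inv_val, map_inv₀]; exact inv_pos.mpr (hx φ)
    · rw [Units.val_inv_eq_inv_val, hI, spanSingleton_inv, Units.val_inv_eq_inv_val]

/-- The narrow (strict) class group `C_K⁺ = I_K/P_K⁺` of the number field `K`. -/
noncomputable abbrev NarrowClassGroup :=
  (FractionalIdeal (𝓞 K)⁰ K)ˣ ⧸ totPosPrincipalSubgroup K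

/-- The group `Z⁺/Kˣ²` of classes of totally positive singular elements modulo squares. -/
noncomputable abbrev ZPlusModSquares :=
  (singularSubgroup K ⊓ totPosSubgroup K : Subgroup Kˣ) ⧸
    (squaresSubgroup K).subgroupOf (singularSubgroup K ⊓ totPosSubgroup K)

/-! ### Auxiliary results -/

/-- The squaring endomorphism of a free `ℤ`-module of finite rank has index `2 ^ rank`. -/
lemma aux_index_sq_free (G : Type*) [CommGroup G] [Module.Free ℤ (Additive G)]
    [Module.Finite ℤ (Additive G)] :
    (powMonoidHom 2 : G →* G).range.index = 2 ^ Module.finrank ℤ (Additive G) := by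
  rw [← ModN.natCard_eq (Additive G) 2, ← Subgroup.index_toAddSubgroup, AddSubgroup.index]
  have : (Subgroup.toAddSubgroup (powMonoidHom 2 : G →* G).range) =
      (LinearMap.range (LinearMap.lsmul ℤ (Additive G) ((2 : ℕ) : ℤ))).toAddSubgroup := by
    ext x
    constructor
    · rintro ⟨y, hy⟩
      refine ⟨Additive.ofMul y, ?_⟩
      rw [LinearMap.lsmul_apply, natCast_zsmul]
      exact hy
    · rintro ⟨y, hy⟩
      rw [LinearMap.lsmul_apply, natCast_zsmul] at hy
      exact ⟨y.toMul, hy⟩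
  rw [this]
  rfl

/-- Index of the squares in the unit group. -/
lemma aux_index_sq_units :
    (powMonoidHom 2 : (𝓞 K)ˣ →* (𝓞 K)ˣ).range.index = 2 ^ (Units.rank K + 1) := by
  set S := (powMonoidHom 2 : (𝓞 K)ˣ →* (𝓞 K)ˣ).range with hS
  set T := Units.torsion K with hT
  have h1 : S.relIndex (S ⊔ T) * (S ⊔ T).index = S.index :=
    Subgroup.relIndex_mul_index le_sup_left
  have h2 : S.relIndex (S ⊔ T) = 2 := by
    rw [Subgroup.relIndex_sup_left]
    have hc : S.subgroupOf T = (powMonoidHom 2 : T →* T).range := by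
      ext x
      rw [Subgroup.mem_subgroupOf]
      constructor
      · rintro ⟨y, hy⟩
        have hy' : y ^ 2 = (x : (𝓞 K)ˣ) := hy
        have hyT : y ∈ T := by
          have hx : IsOfFinOrder (x : (𝓞 K)ˣ) := x.2
          rw [← hy'] at hx
          exact (isOfFinOrder_pow.mp hx).resolve_right (by norm_num)
        exact ⟨⟨y, hyT⟩, Subtype.ext hy'⟩
      · rintro ⟨y, hy⟩
        exact ⟨(y : (𝓞 K)ˣ), congrArg Subtype.val hy⟩
    rw [Subgroup.relIndex, hc, IsCyclic.index_powMonoidHom_range, Nat.gcd_eq_right_iff_dvd]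
    exact (Units.even_torsionOrder K).two_dvd
  have h3 : (S ⊔ T).index = 2 ^ Units.rank K := by
    rw [← Units.finrank_modTorsion K, ← aux_index_sq_free]
    rw [← Subgroup.index_map_eq (f := QuotientGroup.mk' T) _ (QuotientGroup.mk'_surjective T)
      (by rw [QuotientGroup.ker_mk']; exact le_sup_right)]
    congr 1
    ext x
    constructor
    · rintro ⟨y, hy, rfl⟩
      obtain ⟨s, ⟨u, rfl⟩, t, ht, rfl⟩ := Subgroup.mem_sup.mp hy
      refine ⟨QuotientGroup.mk' T u, ?_⟩
      have : QuotientGroup.mk' T t = 1 := (QuotientGroup.eq_one_iff t).mpr ht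
      rw [map_mul, this]
      exact (mul_one ((QuotientGroup.mk' T u) ^ 2)).symm
    · rintro ⟨y, rfl⟩
      obtain ⟨u, rfl⟩ := QuotientGroup.mk'_surjective T y
      exact ⟨u ^ 2, le_sup_left (a := S) (b := T) ⟨u, rfl⟩, by simp⟩
  rw [← h1, h2, h3, pow_succ, mul_comm]

/-- A fractional ideal whose square is the unit ideal lies in the unit ideal. -/
lemma aux_le_one (I : FractionalIdeal (𝓞 K)⁰ K) (h : I ^ 2 = 1) : I ≤ 1 := by
  intro x hx
  have hx2 : x * x ∈ I ^ 2 := by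
    rw [pow_two]
    exact FractionalIdeal.mul_mem_mul hx hx
  rw [h, FractionalIdeal.mem_one_iff] at hx2
  obtain ⟨y, hy⟩ := hx2
  obtain ⟨z, hz⟩ := IsIntegrallyClosed.exists_algebraMap_eq_of_isIntegral_pow (R := 𝓞 K)
    (K := K) (x := x) (n := 2) (by norm_num) (by
      rw [pow_two, ← hy]; exact isIntegral_algebraMap)
  exact (FractionalIdeal.mem_one_iff _).mpr ⟨z, hz⟩

lemma aux_sq_injective :
    Function.Injective (powMonoidHom 2 :
      (FractionalIdeal (𝓞 K)⁰ K)ˣ →* (FractionalIdeal (𝓞 K)⁰ K)ˣ) := by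
  rw [injective_iff_map_eq_one]
  intro I hI
  have hI' : I ^ 2 = 1 := hI
  have h1 : (I : FractionalIdeal (𝓞 K)⁰ K) ≤ 1 :=
    aux_le_one K _ (by rw [← Units.val_pow_eq_pow_val, hI', Units.val_one])
  have h2 : ((I⁻¹ : (FractionalIdeal (𝓞 K)⁰ K)ˣ) : FractionalIdeal (𝓞 K)⁰ K) ≤ 1 :=
    aux_le_one K _ (by rw [← Units.val_pow_eq_pow_val, inv_pow, hI', inv_one, Units.val_one])
  have h3 : I⁻¹ = I := by
    rw [inv_eq_iff_mul_eq_one, ← pow_two, hI']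
  ext1
  apply le_antisymm h1
  have h4 : (I : FractionalIdeal (𝓞 K)⁰ K) * (I : FractionalIdeal (𝓞 K)⁰ K) ≤
      I * 1 := by gcongr
  rw [← Units.val_mul, ← pow_two, hI', mul_one] at h4
  exact h4

/-- The sign homomorphism. -/
noncomputable def auxSign : Kˣ →* ({w : InfinitePlace K // w.IsReal} → SignTypeˣ) :=
  MonoidHom.pi fun w => Units.map
    ((signHom (α := ℝ)).toMonoidHom.comp (InfinitePlace.embedding_of_isReal w.2 : K →* ℝ))

lemma auxSign_apply (x : Kˣ) (w : {w : InfinitePlace K // w.IsReal}) :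
    ((auxSign K x w : SignTypeˣ) : SignType) =
      SignType.sign (InfinitePlace.embedding_of_isReal w.2 (x : K)) := rfl

lemma auxSign_ker : (auxSign K).ker = totPosSubgroup K := by
  ext x
  rw [MonoidHom.mem_ker]
  constructor
  · intro h φ
    set ψ : K →+* ℂ := Complex.ofRealHom.comp φ with hψ
    have hr : ComplexEmbedding.IsReal ψ := by
      rw [ComplexEmbedding.isReal_iff]
      ext y
      simp [hψ, ComplexEmbedding.conjugate_coe_eq]
    have hw : (InfinitePlace.mk ψ).IsReal := InfinitePlace.isReal_mk_iff.mpr hr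
    have h1 := auxSign_apply K x ⟨_, hw⟩
    rw [h] at h1
    have h2 : 0 < InfinitePlace.embedding_of_isReal hw (x : K) := sign_eq_one_iff.mp h1.symm
    have h3 : ((InfinitePlace.embedding_of_isReal hw (x : K) : ℝ) : ℂ) = (φ (x : K) : ℂ) := by
      rw [InfinitePlace.embedding_of_isReal_apply, InfinitePlace.embedding_mk_eq_of_isReal hr]
      rfl
    rw [Complex.ofReal_inj] at h3
    rwa [← h3]
  · intro h
    funext w
    ext1
    rw [auxSign_apply]
    exact sign_eq_one_iff.mpr (h _)

lemma auxSign_surjective : Function.Surjective (auxSign K) := by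
  classical
  intro ε
  let t : (v : InfinitePlace K) → WithAbs v.1 := fun v =>
    if h : v.IsReal then (if ε ⟨v, h⟩ = 1 then 1 else -1) else 1
  obtain ⟨x, hx⟩ := (InfinitePlace.denseRange_algebraMap_pi K).exists_dist_lt t
    (ε := 1 / 2) (by norm_num)
  have key : ∀ v : InfinitePlace K, ∀ hv : v.IsReal,
      |(if ε ⟨v, hv⟩ = 1 then (1 : ℝ) else -1) -
        InfinitePlace.embedding_of_isReal hv x| < 1 / 2 := by
    intro v hv
    have h1 := (dist_le_pi_dist t (algebraMap K _ x) v).trans_lt hx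
    rw [dist_eq_norm] at h1
    have h2 : ‖t v - (algebraMap K ((v : InfinitePlace K) → WithAbs v.1) x) v‖ =
        v ((if ε ⟨v, hv⟩ = 1 then (1 : K) else -1) - x) := by
      simp only [t, dif_pos hv]
      split_ifs <;> rfl
    rw [h2, ← InfinitePlace.norm_embedding_of_isReal hv, map_sub, Real.norm_eq_abs] at h1
    have h3 : InfinitePlace.embedding_of_isReal hv (if ε ⟨v, hv⟩ = 1 then (1 : K) else -1) =
        (if ε ⟨v, hv⟩ = 1 then (1 : ℝ) else -1) := by split_ifs <;> simp
    rwa [h3] at h1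
  by_cases hx0 : x = 0
  · have he : IsEmpty {w : InfinitePlace K // w.IsReal} := by
      refine ⟨fun w => ?_⟩
      have := key w.1 w.2
      rw [hx0, map_zero, abs_lt] at this
      split_ifs at this <;> norm_num at this
    exact ⟨1, funext fun w => he.elim w⟩
  · refine ⟨Units.mk0 x hx0, ?_⟩
    funext w
    ext1
    rw [auxSign_apply, Units.val_mk0]
    have := key w.1 w.2
    rw [abs_lt] at this
    by_cases h : ε w = 1
    · rw [if_pos h] at this
      rw [h, Units.val_one, sign_eq_one_iff]
      linarith [this.2]
    · rw [if_neg h] at this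
      have h' : ε w = -1 := by
        generalize ε w = e at h
        revert e
        decide
      rw [h', Units.val_neg, Units.val_one, sign_eq_neg_one_iff]
      linarith [this.1]

lemma aux_index_totPos :
    (totPosSubgroup K).index = 2 ^ Nat.card {w : InfinitePlace K // w.IsReal} := by
  rw [← auxSign_ker, Subgroup.index_ker, MonoidHom.range_eq_top.mpr (auxSign_surjective K),
    Subgroup.card_top, Nat.card_fun]
  congr 1
  rw [Nat.card_eq_fintype_card]
  decide

/-- Units as elements of the kernel of the principal ideal map. -/
lemma aux_ker_principal :
    (toPrincipalIdeal (𝓞 K) K).ker = (Units.map (algebraMap (𝓞 K) K : 𝓞 K →* K)).range := by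
  ext x
  rw [MonoidHom.mem_ker]
  constructor
  · intro h
    have h1 : ∀ y : Kˣ, toPrincipalIdeal (𝓞 K) K y = 1 → ∃ a : 𝓞 K, algebraMap (𝓞 K) K a = y := by
      intro y hy
      rw [toPrincipalIdeal_eq_iff, Units.val_one] at hy
      rw [← FractionalIdeal.mem_one_iff (𝓞 K)⁰, ← hy]
      exact FractionalIdeal.mem_spanSingleton_self _ _
    obtain ⟨a, ha⟩ := h1 x h
    obtain ⟨b, hb⟩ := h1 x⁻¹ (by rw [map_inv, h, inv_one])
    have hab : a * b = 1 := by
      apply FaithfulSMul.algebraMap_injective (𝓞 K) K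
      rw [map_mul, ha, hb, map_one, Units.mul_inv]
    exact ⟨⟨a, b, hab, by rw [mul_comm, hab]⟩, Units.ext ha⟩
  · rintro ⟨u, rfl⟩
    rw [toPrincipalIdeal_eq_iff, Units.val_one]
    apply le_antisymm
    · rw [FractionalIdeal.spanSingleton_le_iff_mem, FractionalIdeal.mem_one_iff]
      exact ⟨u, rfl⟩
    · rw [FractionalIdeal.one_le, FractionalIdeal.mem_spanSingleton]
      refine ⟨((u⁻¹ : (𝓞 K)ˣ) : 𝓞 K), ?_⟩
      rw [Algebra.smul_def]
      change algebraMap (𝓞 K) K _ * algebraMap (𝓞 K) K _ = 1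
      rw [← map_mul, Units.inv_mul, map_one]

lemma aux_relIndex_sq_ker :
    (squaresSubgroup K).relIndex (toPrincipalIdeal (𝓞 K) K).ker = 2 ^ (Units.rank K + 1) := by
  rw [aux_ker_principal, ← Subgroup.index_comap, ← aux_index_sq_units]
  congr 1
  ext u
  constructor
  · rintro ⟨y, hy⟩
    have hy' : (y : K) ^ 2 = algebraMap (𝓞 K) K u := congrArg Units.val hy
    obtain ⟨a, ha⟩ := IsIntegrallyClosed.exists_algebraMap_eq_of_isIntegral_pow (R := 𝓞 K)
      (K := K) (x := (y : K)) (n := 2) (by norm_num) (by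
        rw [hy']; exact isIntegral_algebraMap)
    have h2 : a ^ 2 = u := by
      apply FaithfulSMul.algebraMap_injective (𝓞 K) K
      rw [map_pow, ha, hy']
    have hu : IsUnit a := (isUnit_pow_iff (n := 2) (by norm_num)).mp (h2 ▸ u.isUnit)
    obtain ⟨v, rfl⟩ := hu
    exact ⟨v, Units.ext h2⟩
  · rintro ⟨v, rfl⟩
    exact ⟨Units.map (algebraMap (𝓞 K) K : 𝓞 K →* K) v, by simp⟩

lemma aux_map_totPos :
    (totPosSubgroup K).map (toPrincipalIdeal (𝓞 K) K) = totPosPrincipalSubgroup K := by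
  ext I
  constructor
  · rintro ⟨x, hx, rfl⟩
    exact ⟨x, hx, coe_toPrincipalIdeal _⟩
  · rintro ⟨x, hx, hI⟩
    exact ⟨x, hx, toPrincipalIdeal_eq_iff.mpr hI.symm⟩

/-- The ideals whose square is principal with totally positive generator. -/
noncomputable def auxT : Subgroup (FractionalIdeal (𝓞 K)⁰ K)ˣ :=
  (totPosPrincipalSubgroup K).comap (powMonoidHom 2)

lemma aux_map_sq_T :
    (auxT K).map (powMonoidHom 2) =
      (singularSubgroup K ⊓ totPosSubgroup K).map (toPrincipalIdeal (𝓞 K) K) := by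
  ext I
  constructor
  · rintro ⟨J, ⟨x, hx, hJ⟩, rfl⟩
    exact ⟨x, ⟨⟨J, by rw [← hJ]; simp⟩, hx⟩, toPrincipalIdeal_eq_iff.mpr hJ.symm⟩
  · rintro ⟨x, ⟨⟨a, ha⟩, hx⟩, rfl⟩
    have hu : IsUnit a := by
      rw [← isUnit_pow_iff (n := 2) (by norm_num), ← ha, ← coe_toPrincipalIdeal]
      exact Units.isUnit _
    obtain ⟨J, rfl⟩ := hu
    have h1 : J ^ 2 = toPrincipalIdeal (𝓞 K) K x := by
      ext1
      rw [coe_toPrincipalIdeal, ha, Units.val_pow_eq_pow_val]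
    refine ⟨J, ⟨x, hx, ?_⟩, h1⟩
    rw [ha]; simp

lemma aux_relIndex_T :
    (totPosPrincipalSubgroup K).relIndex (auxT K) =
      Nat.card {c : NarrowClassGroup K // c ^ 2 = 1} := by
  have h := Subgroup.relIndex_ker (QuotientGroup.mk' (totPosPrincipalSubgroup K)) (K := auxT K)
  rw [QuotientGroup.ker_mk'] at h
  rw [h]
  refine Nat.card_congr (Equiv.subtypeEquivRight fun c => ?_)
  constructor
  · rintro ⟨I, hI, rfl⟩
    exact (QuotientGroup.eq_one_iff (I ^ 2)).mpr hI
  · intro hc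
    obtain ⟨I, rfl⟩ := QuotientGroup.mk'_surjective _ c
    exact ⟨I, (QuotientGroup.eq_one_iff (I ^ 2)).mp hc, rfl⟩

lemma aux_map_comm (H : Subgroup Kˣ) :
    (H.map (powMonoidHom 2)).map (toPrincipalIdeal (𝓞 K) K) =
      (H.map (toPrincipalIdeal (𝓞 K) K)).map (powMonoidHom 2) := by
  rw [Subgroup.map_map, Subgroup.map_map]
  congr 1
  ext1 x
  simp

/-- Let `K` be a number field with `r₁ > 0` real places and `r₂` complex places, and let
`Z⁺ = Z ∩ Kˣ⁺` be the group of totally positive singular elements.  Then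
`dim_{𝔽₂}(Z⁺/Kˣ²) = ρ⁺ + r₂`, where `ρ⁺ = rk₂(C_K⁺)` is the 2-rank of the narrow class
group of `K`. -/
theorem zplus_mod_squares_card (r₁ r₂ ρplus : ℕ)
    (hr₁ : Nat.card {w : InfinitePlace K // w.IsReal} = r₁)
    (hr₂ : Nat.card {w : InfinitePlace K // w.IsComplex} = r₂)
    (hr₁pos : 0 < r₁)
    (hρplus : Nat.card {c : NarrowClassGroup K // c ^ 2 = 1} = 2 ^ ρplus) :
    Nat.card (ZPlusModSquares K) = 2 ^ (ρplus + r₂) := by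
  set pr := toPrincipalIdeal (𝓞 K) K with hpr
  set U := pr.ker with hU
  set P := totPosSubgroup K with hP
  set S := squaresSubgroup K with hS
  set Zp := singularSubgroup K ⊓ P with hZp
  set P2 := P.map (powMonoidHom 2 : Kˣ →* Kˣ) with hP2
  have hST : S = (⊤ : Subgroup Kˣ).map (powMonoidHom 2) := MonoidHom.range_eq_map _
  have hP2S : P2 ≤ S := by rw [hST]; exact Subgroup.map_mono le_top
  have hSZ : S ≤ Zp := by
    rintro _ ⟨x, rfl⟩
    refine ⟨⟨spanSingleton (𝓞 K)⁰ (x : K), ?_⟩, fun φ => ?_⟩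
    · rw [spanSingleton_pow]; simp
    · have : φ (x : K) ≠ 0 := (map_ne_zero φ).mpr x.ne_zero
      have h2 : 0 < φ (x : K) ^ 2 := by positivity
      simpa using h2
  -- the class group index
  have e1 : (P2 ⊔ U).relIndex (Zp ⊔ U) = 2 ^ ρplus := by
    rw [hU, ← Subgroup.relIndex_map_map, hP2, aux_map_comm, hP, aux_map_totPos, ← aux_map_sq_T,
      Subgroup.relIndex_map_map_of_injective _ _ (aux_sq_injective K), aux_relIndex_T, hρplus]
  have e2 : (P2 ⊔ U).relIndex (S ⊔ U) = (P ⊔ U).index := by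
    rw [hU, ← Subgroup.relIndex_map_map, hP2, hST, aux_map_comm, aux_map_comm,
      Subgroup.relIndex_map_map_of_injective _ _ (aux_sq_injective K),
      Subgroup.relIndex_map_map, top_sup_eq, Subgroup.relIndex_top_right]
  have e3 : (P2 ⊔ U).relIndex (S ⊔ U) * (S ⊔ U).relIndex (Zp ⊔ U) =
      (P2 ⊔ U).relIndex (Zp ⊔ U) :=
    Subgroup.relIndex_mul_relIndex _ _ _ (sup_le_sup_right hP2S _) (sup_le_sup_right hSZ _)
  have e4 : S.relIndex (S ⊔ U) * (S ⊔ U).relIndex (Zp ⊔ U) = S.relIndex (Zp ⊔ U) :=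
    Subgroup.relIndex_mul_relIndex _ _ _ le_sup_left (sup_le_sup_right hSZ _)
  have e5 : S.relIndex Zp * Zp.relIndex (Zp ⊔ U) = S.relIndex (Zp ⊔ U) :=
    Subgroup.relIndex_mul_relIndex _ _ _ hSZ le_sup_left
  have e6 : Zp.relIndex (Zp ⊔ U) = P.relIndex U := by
    rw [Subgroup.relIndex_sup_left, ← Subgroup.inf_relIndex_right, ← Subgroup.inf_relIndex_right P]
    congr 1
    apply le_antisymm
    · exact inf_le_inf_right _ inf_le_right
    · rintro x ⟨hx, hxU⟩
      refine ⟨⟨⟨1, ?_⟩, hx⟩, hxU⟩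
      rw [one_pow, ← coe_toPrincipalIdeal, ← hpr, MonoidHom.mem_ker.mp hxU, Units.val_one]
  have e7 : S.relIndex (S ⊔ U) = 2 ^ (r₁ + r₂) := by
    rw [Subgroup.relIndex_sup_left, hS, hU, aux_relIndex_sq_ker]
    classical
    congr 1
    have h1 := InfinitePlace.card_eq_nrRealPlaces_add_nrComplexPlaces K
    have h2 : 0 < Fintype.card (InfinitePlace K) := Fintype.card_pos
    rw [← hr₁, ← hr₂, Nat.card_eq_fintype_card, Nat.card_eq_fintype_card]
    unfold InfinitePlace.nrRealPlaces InfinitePlace.nrComplexPlaces at h1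
    unfold Units.rank
    omega
  have e8 : P.relIndex U * (P ⊔ U).index = 2 ^ r₁ := by
    rw [← Subgroup.relIndex_sup_left, Subgroup.relIndex_mul_index le_sup_left, hP,
      aux_index_totPos, hr₁]
  change S.relIndex Zp = _
  rw [e6, ← e4, e7] at e5
  rw [e2, e1] at e3
  have hpos : 0 < 2 ^ r₁ := by positivity
  apply Nat.eq_of_mul_eq_mul_right hpos
  calc S.relIndex Zp * 2 ^ r₁ = (S.relIndex Zp * P.relIndex U) * (P ⊔ U).index := by
        rw [← e8]; ring
    _ = 2 ^ (r₁ + r₂) * ((P ⊔ U).index * (S ⊔ U).relIndex (Zp ⊔ U)) := by rw [e5]; ring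
    _ = 2 ^ (ρplus + r₂) * 2 ^ r₁ := by rw [e3]; ring
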